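/- arXiv:1908.05272 — 5 statements merged into one kernel-verified Lean document; each statement's English description precedes it below -/
import Mathlib

section
/- Let (p_1,…,p_m) be a random vector with values in [0,1]^m that is PRDS on a set I_0 ⊆ {1,…,m} with #I_0 = m_0, and suppose P(p_i ≤ x) ≤ x for every x ∈ [0,1] and every i ∈ I_0. Then the Benjamini–Hochberg procedure at level α ∈ (0,1) controls the false discovery rate at level (m_0/m)·α, i.e. E[Q] ≤ (m_0/m)·α ≤ α. -/
open Filter Set MeasureTheory
open scoped Classical

/-! Writing `K` for the number of rejections and `c` for the critical values, the false discovery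
proportion is `∑ i ∈ I₀, 1{p i ≤ c K} / K`, so it suffices to bound each summand by `β` in mean.
Given `p i ≤ c j`, the event `K = j` has probability
`P(K ≤ j | p i ≤ c j) - P(K ≤ j - 1 | p i ≤ c j)`. Since `{K ≤ j - 1}` is increasing in the
p-values, PRDS makes `P(K ≤ j - 1 | p i ≤ x)` nondecreasing in `x`, so replacing the subtracted
term by `P(K ≤ j - 1 | p i ≤ c (j - 1))` only increases the difference. The bound
`P(p i ≤ c j) ≤ β j` cancels the weight `1 / j`, and what remains telescopes to at most `β`. -/

section StepUp

variable {ι : Type*} [Fintype ι] {c : ℕ → ℝ} {x : ι → ℝ}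

/-- The number of rejections of the step-up procedure with critical values `c 1, c 2, …` applied
to the p-values `x`: the largest `j` for which at least `j` of the p-values are at most `c j`,
that is, for which the `j`-th smallest one is. It is `0` if no `j ≥ 1` qualifies. -/
noncomputable def stepUpCount (c : ℕ → ℝ) (x : ι → ℝ) : ℕ :=
  sSup {j | j ≤ (Finset.univ.filter fun i => x i ≤ c j).card}

/-- The set of indices rejected by the step-up procedure with critical values `c 1, c 2, …`. -/
noncomputable def stepUpRejections (c : ℕ → ℝ) (x : ι → ℝ) : Finset ι :=
  Finset.univ.filter fun i => x i ≤ c (stepUpCount c x)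

/-- The false discovery proportion of the rejection set `R` when the true null hypotheses are
`I₀`. It is `0` for `R = ∅` because division by zero gives `0`. -/
noncomputable def falseDiscoveryProportion {ι : Type*} [DecidableEq ι] (I₀ R : Finset ι) : ℝ :=
  (R ∩ I₀).card / R.card

theorem isGreatest_stepUpCount (c : ℕ → ℝ) (x : ι → ℝ) :
    IsGreatest {j | j ≤ (Finset.univ.filter fun i => x i ≤ c j).card} (stepUpCount c x) := by
  have hbdd : BddAbove {j | j ≤ (Finset.univ.filter fun i => x i ≤ c j).card} :=
    ⟨Fintype.card ι, fun _ hj => hj.trans (Finset.card_le_univ _)⟩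
  exact ⟨Nat.sSup_mem ⟨0, Nat.zero_le _⟩ hbdd, fun _ => le_csSup hbdd⟩

theorem stepUpCount_le_card (c : ℕ → ℝ) (x : ι → ℝ) : stepUpCount c x ≤ Fintype.card ι :=
  (isGreatest_stepUpCount c x).1.trans (Finset.card_le_univ _)

theorem stepUpCount_eq_sSup_le_card (c : ℕ → ℝ) (x : ι → ℝ) :
    stepUpCount c x =
      sSup {j | j ≤ Fintype.card ι ∧ j ≤ (Finset.univ.filter fun i => x i ≤ c j).card} := by
  rw [stepUpCount]
  congr! 3 with j
  exact (and_iff_right_of_imp fun hj => hj.trans (Finset.card_le_univ _)).symm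

theorem card_stepUpRejections (hc : Monotone c) (x : ι → ℝ) :
    (stepUpRejections c x).card = stepUpCount c x := by
  have hge : stepUpCount c x ≤ (stepUpRejections c x).card := (isGreatest_stepUpCount c x).1
  refine ((isGreatest_stepUpCount c x).2 ?_).antisymm hge
  exact Finset.card_le_card (Finset.monotone_filter_right _ fun _ _ hi => hi.trans (hc hge))

theorem le_stepUpCount_iff {j : ℕ} :
    j ≤ stepUpCount c x ↔ ∃ l, j ≤ l ∧ l ≤ (Finset.univ.filter fun i => x i ≤ c l).card :=
  ⟨fun h => ⟨_, h, (isGreatest_stepUpCount c x).1⟩,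
    fun ⟨_, hjl, hl⟩ => hjl.trans ((isGreatest_stepUpCount c x).2 hl)⟩

theorem antitone_stepUpCount (c : ℕ → ℝ) : Antitone (stepUpCount c : (ι → ℝ) → ℕ) := by
  intro x y hxy
  refine le_stepUpCount_iff.2 ⟨_, le_rfl, le_trans (isGreatest_stepUpCount c y).1 ?_⟩
  exact Finset.card_le_card (Finset.monotone_filter_right _ fun i _ hi => (hxy i).trans hi)

theorem measurable_card_filter_le (a : ℝ) :
    Measurable fun x : ι → ℝ => (Finset.univ.filter fun i => x i ≤ a).card := by
  simp only [Finset.card_filter]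
  exact Finset.measurable_sum _ fun i _ => Measurable.ite
    (measurableSet_le (measurable_pi_apply i) measurable_const) measurable_const measurable_const

theorem measurable_stepUpCount (c : ℕ → ℝ) : Measurable (stepUpCount c : (ι → ℝ) → ℕ) := by
  refine measurable_of_Ici fun j => ?_
  simp only [preimage, mem_Ici, le_stepUpCount_iff, ofPred_exists, ofPred_and]
  exact .iUnion fun l =>
    (MeasurableSet.const _).inter (measurable_card_filter_le _ measurableSet_Ici)

theorem falseDiscoveryProportion_eq_ite {ι : Type*} [DecidableEq ι] (I₀ R : Finset ι) :
    falseDiscoveryProportion I₀ R =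
      if 0 < R.card then ((R ∩ I₀).card : ℝ) / R.card else 0 := by
  rw [falseDiscoveryProportion]
  split_ifs with h
  · rfl
  · simp [Nat.eq_zero_of_not_pos h]

theorem falseDiscoveryProportion_stepUpRejections [DecidableEq ι] (hc : Monotone c)
    (I₀ : Finset ι) (x : ι → ℝ) :
    falseDiscoveryProportion I₀ (stepUpRejections c x) =
      ∑ i ∈ I₀, if x i ≤ c (stepUpCount c x) then (stepUpCount c x : ℝ)⁻¹ else 0 := by
  have hinter : stepUpRejections c x ∩ I₀ = I₀.filter fun i => x i ≤ c (stepUpCount c x) := by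
    ext i
    simp [stepUpRejections, and_comm]
  rw [falseDiscoveryProportion, card_stepUpRejections hc, hinter, ← Finset.sum_filter,
    Finset.sum_const, nsmul_eq_mul, div_eq_mul_inv]

end StepUp

section Conditioning

open scoped ProbabilityTheory

variable {Ω β : Type*} [MeasurableSpace Ω] {μ : Measure Ω}

theorem cond_real_apply {A : Set Ω} (hA : MeasurableSet A) (E : Set Ω) :
    μ[|A].real E = (μ.real A)⁻¹ * μ.real (A ∩ E) := by
  simp [measureReal_def, ProbabilityTheory.cond_apply hA]

variable [IsFiniteMeasure μ]

theorem real_mul_cond_real {A : Set Ω} (hA : MeasurableSet A) (E : Set Ω) :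
    μ.real A * μ[|A].real E = μ.real (A ∩ E) := by
  rw [mul_comm, measureReal_def, measureReal_def, ← ENNReal.toReal_mul,
    ProbabilityTheory.cond_mul_eq_inter hA, measureReal_def]

section Preimage

variable [MeasurableSpace β] {X : Ω → β} {E : Set Ω} {g : β → ℝ} {T : Set β}

theorem setIntegral_preimage_of_ae_eq_condProb (hX : Measurable X) (hE : MeasurableSet E)
    (hg : (fun ω => g (X ω)) =ᵐ[μ] μ⟦E | MeasurableSpace.comap X inferInstance⟧)
    (hT : MeasurableSet T) :
    ∫ ω in X ⁻¹' T, g (X ω) ∂μ = μ.real (X ⁻¹' T ∩ E) := by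
  rw [integral_congr_ae (ae_restrict_of_ae hg),
    setIntegral_condExp hX.comap_le ((integrable_const _).indicator hE) ⟨T, hT, rfl⟩,
    setIntegral_indicator hE, setIntegral_const, smul_eq_mul, mul_one]

theorem real_preimage_inter_le_of_ae_eq_condProb {S : Set β} {γ : ℝ} (hX : Measurable X)
    (hXS : ∀ ω, X ω ∈ S) (hE : MeasurableSet E)
    (hg : (fun ω => g (X ω)) =ᵐ[μ] μ⟦E | MeasurableSpace.comap X inferInstance⟧)
    (hT : MeasurableSet T) (hle : ∀ t ∈ S ∩ T, g t ≤ γ) :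
    μ.real (X ⁻¹' T ∩ E) ≤ γ * μ.real (X ⁻¹' T) := by
  have hint : Integrable (fun ω => g (X ω)) μ := integrable_condExp.congr hg.symm
  calc μ.real (X ⁻¹' T ∩ E) = ∫ ω in X ⁻¹' T, g (X ω) ∂μ :=
        (setIntegral_preimage_of_ae_eq_condProb hX hE hg hT).symm
    _ ≤ ∫ _ in X ⁻¹' T, γ ∂μ :=
        setIntegral_mono_on hint.integrableOn (integrable_const _) (hX hT)
          fun ω hω => hle _ ⟨hXS ω, hω⟩
    _ = γ * μ.real (X ⁻¹' T) := by rw [setIntegral_const, smul_eq_mul, mul_comm]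

theorem le_real_preimage_inter_of_ae_eq_condProb {S : Set β} {γ : ℝ} (hX : Measurable X)
    (hXS : ∀ ω, X ω ∈ S) (hE : MeasurableSet E)
    (hg : (fun ω => g (X ω)) =ᵐ[μ] μ⟦E | MeasurableSpace.comap X inferInstance⟧)
    (hT : MeasurableSet T) (hle : ∀ t ∈ S ∩ T, γ ≤ g t) :
    γ * μ.real (X ⁻¹' T) ≤ μ.real (X ⁻¹' T ∩ E) := by
  have hint : Integrable (fun ω => g (X ω)) μ := integrable_condExp.congr hg.symm
  calc γ * μ.real (X ⁻¹' T) = ∫ _ in X ⁻¹' T, γ ∂μ := by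
        rw [setIntegral_const, smul_eq_mul, mul_comm]
    _ ≤ ∫ ω in X ⁻¹' T, g (X ω) ∂μ :=
        setIntegral_mono_on (integrable_const _) hint.integrableOn (hX hT)
          fun ω hω => hle _ ⟨hXS ω, hω⟩
    _ = μ.real (X ⁻¹' T ∩ E) := setIntegral_preimage_of_ae_eq_condProb hX hE hg hT

end Preimage

theorem cond_real_le_cond_real_of_mul_le {A B E : Set Ω} {γ : ℝ} (hA : MeasurableSet A)
    (hB : MeasurableSet B) (hAB : A ⊆ B) (hAE : μ.real (A ∩ E) ≤ γ * μ.real A)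
    (hBE : γ * μ.real (B \ A) ≤ μ.real (B \ A ∩ E)) : μ[|A].real E ≤ μ[|B].real E := by
  rcases (measureReal_nonneg (μ := μ) (s := A)).eq_or_lt with hA0 | hA0
  · simp [cond_real_apply hA, ← hA0]
  have hB0 : 0 < μ.real B := hA0.trans_le (measureReal_mono hAB)
  have hsplit : μ.real B = μ.real A + μ.real (B \ A) := by
    rw [← measureReal_inter_add_sdiff (s := B) hA, inter_eq_right.2 hAB]
  have hsplitE : μ.real (B ∩ E) = μ.real (A ∩ E) + μ.real (B \ A ∩ E) := by
    rw [← measureReal_inter_add_sdiff (s := B ∩ E) hA, inter_right_comm, inter_eq_right.2 hAB,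
      ← inter_sdiff_right_comm]
  rw [cond_real_apply hA, cond_real_apply hB, ← div_eq_inv_mul, ← div_eq_inv_mul,
    div_le_div_iff₀ hA0 hB0, hsplit, hsplitE]
  have hcross : μ.real (A ∩ E) * μ.real (B \ A) ≤ μ.real (B \ A ∩ E) * μ.real A :=
    calc μ.real (A ∩ E) * μ.real (B \ A) ≤ γ * μ.real A * μ.real (B \ A) := by gcongr
      _ = γ * μ.real (B \ A) * μ.real A := by ring
      _ ≤ μ.real (B \ A ∩ E) * μ.real A := by gcongr
  linarith

theorem monotoneOn_cond_real_preimage_Iic [LinearOrder β] [TopologicalSpace β]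
    [OrderClosedTopology β] [MeasurableSpace β] [OpensMeasurableSpace β] {X : Ω → β} {E : Set Ω}
    {g : β → ℝ} {S : Set β} (hX : Measurable X) (hXS : ∀ ω, X ω ∈ S) (hE : MeasurableSet E)
    (hmono : MonotoneOn g S)
    (hg : (fun ω => g (X ω)) =ᵐ[μ] μ⟦E | MeasurableSpace.comap X inferInstance⟧) :
    MonotoneOn (fun a => μ[|X ⁻¹' Iic a].real E) S := by
  intro a ha b _ hab
  refine cond_real_le_cond_real_of_mul_le (γ := g a) (hX measurableSet_Iic)
    (hX measurableSet_Iic) (preimage_mono (Iic_subset_Iic.2 hab)) ?_ ?_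
  · exact real_preimage_inter_le_of_ae_eq_condProb hX hXS hE hg measurableSet_Iic
      fun t ht => hmono ht.1 ha ht.2
  · rw [← preimage_sdiff]
    exact le_real_preimage_inter_of_ae_eq_condProb hX hXS hE hg
      (measurableSet_Iic.diff measurableSet_Iic)
      fun t ht => hmono ha ht.1 (not_le.1 ht.2.2).le

end Conditioning

section SelectedEvent

open scoped ProbabilityTheory

variable {Ω : Type*} {A : ℕ → Set Ω} {K : Ω → ℕ} {m : ℕ}

theorem ite_mem_inv_eq_sum_indicator (A : ℕ → Set Ω) (hKm : ∀ ω, K ω ≤ m) (ω : Ω) :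
    (if ω ∈ A (K ω) then (K ω : ℝ)⁻¹ else 0) =
      ∑ j ∈ Finset.range m, (A (j + 1) ∩ K ⁻¹' {j + 1}).indicator
        (fun _ => ((j : ℝ) + 1)⁻¹) ω := by
  have hKm := hKm ω
  rcases hK : K ω with _ | n
  · simp [hK]
  · rw [Finset.sum_eq_single_of_mem n (by grind)]
    · simp [indicator_apply, hK]
    · intro j _ hj
      exact indicator_of_notMem (by grind) _

variable [MeasurableSpace Ω] {μ : Measure Ω} [IsFiniteMeasure μ] {β : ℝ}

theorem integrable_ite_mem_inv (hA : ∀ j, MeasurableSet (A j)) (hK : Measurable K)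
    (hKm : ∀ ω, K ω ≤ m) :
    Integrable (fun ω => if ω ∈ A (K ω) then (K ω : ℝ)⁻¹ else 0) μ := by
  simp only [ite_mem_inv_eq_sum_indicator A hKm]
  exact integrable_finsetSum _ fun j _ =>
    (integrable_const _).indicator ((hA _).inter (hK (measurableSet_singleton _)))

theorem integral_ite_mem_inv_eq_sum (hA : ∀ j, MeasurableSet (A j)) (hK : Measurable K)
    (hKm : ∀ ω, K ω ≤ m) :
    ∫ ω, (if ω ∈ A (K ω) then (K ω : ℝ)⁻¹ else 0) ∂μ =
      ∑ j ∈ Finset.range m, μ.real (A (j + 1) ∩ K ⁻¹' {j + 1}) * ((j : ℝ) + 1)⁻¹ := by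
  have hmeas (j : ℕ) : MeasurableSet (A (j + 1) ∩ K ⁻¹' {j + 1}) :=
    (hA _).inter (hK (measurableSet_singleton _))
  simp only [ite_mem_inv_eq_sum_indicator A hKm]
  rw [integral_finsetSum _ fun j _ => (integrable_const _).indicator (hmeas j)]
  simp only [integral_indicator_const _ (hmeas _), smul_eq_mul]

theorem real_inter_fiber_mul_inv_le {A : Set Ω} {j : ℕ} (hA : MeasurableSet A)
    (hK : Measurable K) (hAj : μ.real A ≤ β * (j + 1)) :
    μ.real (A ∩ K ⁻¹' {j + 1}) * ((j : ℝ) + 1)⁻¹ ≤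
      β * (μ[|A].real (K ⁻¹' Iic (j + 1)) - μ[|A].real (K ⁻¹' Iic j)) := by
  have hfiber : K ⁻¹' {j + 1} = K ⁻¹' Iic (j + 1) \ K ⁻¹' Iic j := by
    ext ω
    simp only [mem_preimage, mem_singleton_iff, Set.mem_sdiff, mem_Iic]
    omega
  rw [← measureReal_sdiff (preimage_mono (Iic_subset_Iic.2 j.le_succ)) (hK measurableSet_Iic),
    ← hfiber, ← real_mul_cond_real hA, mul_inv_le_iff₀ (by positivity), mul_right_comm]
  gcongr

theorem integral_ite_mem_inv_le (hA : ∀ j, MeasurableSet (A j)) (hK : Measurable K)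
    (hKm : ∀ ω, K ω ≤ m) (hβ : 0 ≤ β) (hAβ : ∀ j ∈ Icc 1 m, μ.real (A j) ≤ β * j)
    (hcond : ∀ j < m, μ[|A j].real (K ⁻¹' Iic j) ≤ μ[|A (j + 1)].real (K ⁻¹' Iic j)) :
    ∫ ω, (if ω ∈ A (K ω) then (K ω : ℝ)⁻¹ else 0) ∂μ ≤ β := by
  let f (j : ℕ) : ℝ := μ[|A j].real (K ⁻¹' Iic j)
  have hstep : ∀ j ∈ Finset.range m,
      μ.real (A (j + 1) ∩ K ⁻¹' {j + 1}) * ((j : ℝ) + 1)⁻¹ ≤ β * (f (j + 1) - f j) := by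
    intro j hj
    have hjm : j < m := Finset.mem_range.1 hj
    have hAj : μ.real (A (j + 1)) ≤ β * (j + 1) := by
      exact_mod_cast hAβ (j + 1) ⟨Nat.le_add_left _ _, hjm⟩
    refine (real_inter_fiber_mul_inv_le (hA _) hK hAj).trans ?_
    gcongr
    exact hcond j hjm
  calc ∫ ω, (if ω ∈ A (K ω) then (K ω : ℝ)⁻¹ else 0) ∂μ
      = ∑ j ∈ Finset.range m, μ.real (A (j + 1) ∩ K ⁻¹' {j + 1}) * ((j : ℝ) + 1)⁻¹ :=
        integral_ite_mem_inv_eq_sum hA hK hKm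
    _ ≤ ∑ j ∈ Finset.range m, β * (f (j + 1) - f j) := Finset.sum_le_sum hstep
    _ = β * (f m - f 0) := by rw [← Finset.mul_sum, Finset.sum_range_sub]
    _ ≤ β * 1 := by
        gcongr
        linarith [measureReal_le_one (μ := μ[|A m]) (s := K ⁻¹' Iic m),
          measureReal_nonneg (μ := μ[|A 0]) (s := K ⁻¹' Iic 0)]
    _ = β := mul_one β

end SelectedEvent

section PRDS

open scoped ProbabilityTheory

variable {Ω ι : Type*} [MeasurableSpace Ω] {μ : Measure Ω}
  {p : Ω → ι → ℝ} {I₀ : Finset ι} {S : Set ℝ}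

/-- Positive regression dependence on the subset `I₀` (PRDS) of a random vector `p` whose
coordinates take values in `S`: the conditional probability of every measurable upper set given
`p i`, for `i ∈ I₀`, has a version which is a nondecreasing function of `p i`. Only the values on
`S` of that function matter, so monotonicity is required there only. -/
def IsPRDS (p : Ω → ι → ℝ) (I₀ : Finset ι) (S : Set ℝ) (μ : Measure Ω) : Prop :=
  ∀ i ∈ I₀, ∀ D : Set (ι → ℝ), MeasurableSet D → IsUpperSet D →
    ∃ g : ℝ → ℝ, MonotoneOn g S ∧ (fun ω => g (p ω i)) =ᵐ[μ]
      μ⟦p ⁻¹' D | MeasurableSpace.comap (fun ω => p ω i) inferInstance⟧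

variable [IsFiniteMeasure μ]

theorem IsPRDS.monotoneOn_cond_real (hPRDS : IsPRDS p I₀ S μ) (hp : Measurable p)
    {i : ι} (hi : i ∈ I₀) (hpS : ∀ ω, p ω i ∈ S) {D : Set (ι → ℝ)} (hD : MeasurableSet D)
    (hD_upper : IsUpperSet D) :
    MonotoneOn (fun a => μ[|{ω | p ω i ≤ a}].real (p ⁻¹' D)) S := by
  obtain ⟨g, hg, hgD⟩ := hPRDS i hi D hD hD_upper
  exact monotoneOn_cond_real_preimage_Iic ((measurable_pi_apply i).comp hp) hpS (hp hD) hg hgD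

theorem IsPRDS.integral_ite_le_stepUpCount_inv_le [Fintype ι] (hPRDS : IsPRDS p I₀ S μ)
    (hp : Measurable p) {i : ι} (hi : i ∈ I₀) (hpS : ∀ ω, p ω i ∈ S) {c : ℕ → ℝ}
    (hc : Monotone c) (hcS : ∀ j ≤ Fintype.card ι, c j ∈ S) {β : ℝ}
    (hpβ : ∀ j ∈ Icc 1 (Fintype.card ι), μ.real {ω | p ω i ≤ c j} ≤ β * j) :
    ∫ ω, (if p ω i ≤ c (stepUpCount c (p ω)) then (stepUpCount c (p ω) : ℝ)⁻¹ else 0) ∂μ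
      ≤ β := by
  have hβ : 0 ≤ β := by
    simpa using measureReal_nonneg.trans (hpβ 1 ⟨le_rfl, Fintype.card_pos_iff.2 ⟨i⟩⟩)
  have hpi : Measurable fun ω => p ω i := (measurable_pi_apply i).comp hp
  refine integral_ite_mem_inv_le (A := fun j => {ω | p ω i ≤ c j})
    (fun j => measurableSet_le hpi measurable_const) ((measurable_stepUpCount c).comp hp)
    (fun ω => stepUpCount_le_card c (p ω)) hβ hpβ fun j hj => ?_
  have hupper : IsUpperSet (stepUpCount c ⁻¹' Iic j : Set (ι → ℝ)) :=
    fun _ _ hxy hx => (antitone_stepUpCount c hxy).trans hx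
  exact hPRDS.monotoneOn_cond_real hp hi hpS (measurable_stepUpCount c measurableSet_Iic) hupper
    (hcS j hj.le) (hcS (j + 1) hj) (hc j.le_succ)

theorem BH_controls_FDR_general [Fintype ι] [DecidableEq ι] (hp : Measurable p)
    (hpS : ∀ ω, ∀ i ∈ I₀, p ω i ∈ S) {c : ℕ → ℝ} (hc : Monotone c)
    (hcS : ∀ j ≤ Fintype.card ι, c j ∈ S) {β : ℝ}
    (hpβ : ∀ i ∈ I₀, ∀ j ∈ Icc 1 (Fintype.card ι), μ.real {ω | p ω i ≤ c j} ≤ β * j)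
    (hPRDS : IsPRDS p I₀ S μ) :
    ∫ ω, falseDiscoveryProportion I₀ (stepUpRejections c (p ω)) ∂μ ≤ I₀.card * β := by
  have hint (i : ι) : Integrable (fun ω => if p ω i ≤ c (stepUpCount c (p ω)) then
      (stepUpCount c (p ω) : ℝ)⁻¹ else 0) μ :=
    integrable_ite_mem_inv (A := fun j => {ω | p ω i ≤ c j})
      (fun j => measurableSet_le ((measurable_pi_apply i).comp hp) measurable_const)
      ((measurable_stepUpCount c).comp hp) fun ω => stepUpCount_le_card c (p ω)
  simp only [falseDiscoveryProportion_stepUpRejections hc]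
  rw [integral_finsetSum _ fun i _ => hint i, ← nsmul_eq_mul]
  exact Finset.sum_le_card_nsmul _ _ _ fun i hi =>
    hPRDS.integral_ite_le_stepUpCount_inv_le hp hi (hpS · i hi) hc hcS (hpβ i hi)

end PRDS

/-- Benjamini–Yekutieli: if the p-value vector `(p_1, …, p_m)` is PRDS on `I₀`
(with `#I₀ = m₀`) and each null p-value is superuniform, then the Benjamini–Hochberg procedure
at level `α ∈ (0,1)` controls the FDR: `E[Q] ≤ (m₀/m)·α ≤ α`.

The BH procedure rejects `i` iff `p_i ≤ (k/m)·α` where `k = max {j : p_(j) ≤ (j/m)·α}`;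
we use the equivalent characterization `p_(j) ≤ c ↔ #{i : p_i ≤ c} ≥ j`, so that
`k = sup {j ≤ m : j ≤ #{i : p_i ≤ (j/m)·α}}` (a set containing `0`).
PRDS on `I₀` means: for every `i ∈ I₀` and every measurable increasing set `D ⊆ ℝ^m`, there is
a nondecreasing `g : [0,1] → [0,1]` such that `g (p_i)` is a version of `E[1_D (p) | p_i]`. -/
theorem BH_controls_FDR
    {Ω : Type*} [MeasurableSpace Ω] (P : Measure Ω) [IsProbabilityMeasure P]
    (m : ℕ) (hm : 1 ≤ m) (α : ℝ) (hα : α ∈ Set.Ioo (0:ℝ) 1)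
    (p : Ω → Fin m → ℝ) (hp_meas : Measurable p)
    (hp_val : ∀ ω i, p ω i ∈ Set.Icc (0:ℝ) 1)
    (I₀ : Finset (Fin m)) (m₀ : ℕ) (hm₀ : I₀.card = m₀)
    -- superuniformity of the null p-values
    (hsuper : ∀ i ∈ I₀, ∀ x ∈ Set.Icc (0:ℝ) 1,
      P {ω | p ω i ≤ x} ≤ ENNReal.ofReal x)
    -- PRDS on I₀
    (hPRDS : ∀ i ∈ I₀, ∀ D : Set (Fin m → ℝ), MeasurableSet D →
      (∀ x y : Fin m → ℝ, x ∈ D → x ≤ y → y ∈ D) →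
      ∃ g : ℝ → ℝ, MonotoneOn g (Set.Icc 0 1) ∧
        (fun ω => g (p ω i)) =ᵐ[P]
          P[(fun ω => D.indicator (fun _ => (1:ℝ)) (p ω)) |
            MeasurableSpace.comap (fun ω => p ω i) (inferInstance : MeasurableSpace ℝ)])
    -- the BH procedure
    (k : Ω → ℕ)
    (hk : ∀ ω, k ω = sSup {j | j ≤ m ∧
      j ≤ (Finset.univ.filter (fun i => p ω i ≤ ((j : ℝ) / m) * α)).card})
    (R : Ω → Finset (Fin m))
    (hR : ∀ ω, R ω = Finset.univ.filter (fun i => p ω i ≤ ((k ω : ℝ) / m) * α))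
    -- the false discovery proportion
    (Q : Ω → ℝ)
    (hQ : ∀ ω, Q ω = if 0 < (R ω).card then ((R ω ∩ I₀).card : ℝ) / (R ω).card else 0) :
    (∫ ω, Q ω ∂P) ≤ ((m₀ : ℝ) / m) * α ∧ ((m₀ : ℝ) / m) * α ≤ α := by
  have hm_pos : (0 : ℝ) < m := by exact_mod_cast hm
  have hratio {j : ℕ} (hj : j ≤ m) : (j : ℝ) / m ≤ 1 :=
    div_le_one_of_le₀ (by exact_mod_cast hj) hm_pos.le
  refine ⟨?_, mul_le_of_le_one_left hα.1.le (hratio (hm₀ ▸ card_finset_fin_le I₀))⟩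
  let c (j : ℕ) : ℝ := (j : ℝ) / m * α
  have hc : Monotone c := fun j l hjl => by have := hα.1; dsimp only [c]; gcongr
  have hc_mem {j : ℕ} (hj : j ≤ Fintype.card (Fin m)) : c j ∈ Icc (0 : ℝ) 1 :=
    ⟨by have := hα.1; positivity, mul_le_one₀ (hratio (by simpa using hj)) hα.1.le hα.2.le⟩
  have hk_eq (ω : Ω) : k ω = stepUpCount c (p ω) := by
    simp only [hk, stepUpCount_eq_sSup_le_card, Fintype.card_fin, c]
  have hQ_eq (ω : Ω) : Q ω = falseDiscoveryProportion I₀ (stepUpRejections c (p ω)) := by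
    simp only [hQ, hR, hk_eq, falseDiscoveryProportion_eq_ite, stepUpRejections, c]
  have hnull : ∀ i ∈ I₀, ∀ j ∈ Icc 1 (Fintype.card (Fin m)),
      P.real {ω | p ω i ≤ c j} ≤ α / m * j := fun i hi j hj =>
    (ENNReal.toReal_le_of_le_ofReal (hc_mem hj.2).1 (hsuper i hi _ (hc_mem hj.2))).trans_eq
      (by dsimp only [c]; ring)
  calc ∫ ω, Q ω ∂P ≤ I₀.card * (α / m) := by
        simpa only [hQ_eq] using BH_controls_FDR_general hp_meas (fun ω i _ => hp_val ω i) hc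
          (fun _ => hc_mem) hnull fun i hi D hD hup => hPRDS i hi D hD fun _ _ hx hxy => hup hxy hx
    _ = m₀ / m * α := by rw [hm₀]; ring
end

section
/- Assume that if α* > 0 then every open neighborhood of α* contains points s₁, s₂ with a(s₁) > s₁/α and a(s₂) < s₂/α. Then b_k → α* as k → ∞. -/
open Filter Set

/-!
Write `S f = {x ∈ K | g x ≤ f x}`. To the right of `sup (S f)` the lower semicontinuous function
`g - f` is positive, so on the part of `K` beyond any larger point it is bounded below by some
`δ > 0`. Once `F i` is `δ`-close to `f`, the set `S (F i)` has no points there.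
In the other direction, a point where `g < f` strictly lies in `S (F i)` for all large `i`, and
such points arbitrarily close to `sup (S f)` keep `sup (S (F i))` from dropping; if `sup (S f)` is
the left end of `K`, there is no room to drop.
-/

section Convergence

variable {ι X : Type*} {l : Filter ι} {K : Set X}

theorem eventually_forall_lt_of_isCompact [TopologicalSpace X] {F : ι → X → ℝ} {f g : X → ℝ}
    (hK : IsCompact K) (hf : UpperSemicontinuousOn f K) (hg : LowerSemicontinuousOn g K)
    (hF : TendstoUniformlyOn F f l K) (hfg : ∀ x ∈ K, f x < g x) :
    ∀ᶠ i in l, ∀ x ∈ K, F i x < g x := by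
  rcases K.eq_empty_or_nonempty with rfl | hne
  · simp
  have hgap : LowerSemicontinuousOn (fun x ↦ g x - f x) K := by
    simpa only [sub_eq_add_neg, Function.comp_def] using
      hg.add (continuous_neg.comp_upperSemicontinuousOn_antitone hf fun _ _ ↦ neg_le_neg)
  obtain ⟨x₀, hx₀, hmin⟩ := hgap.exists_isMinOn hne hK
  have hδ : 0 < g x₀ - f x₀ := sub_pos.2 (hfg x₀ hx₀)
  filter_upwards [Metric.tendstoUniformlyOn_iff.1 hF _ hδ] with i hi x hx
  have hlt : F i x - f x < g x - f x :=
    calc F i x - f x ≤ dist (F i x) (f x) := le_abs_self _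
      _ < g x₀ - f x₀ := dist_comm (f x) (F i x) ▸ hi x hx
      _ ≤ g x - f x := hmin hx
  linarith

variable [ConditionallyCompleteLinearOrder X] [TopologicalSpace X]

theorem eventually_lt_sSup_setOf_le_of_mem_closure [ClosedIicTopology X] {Y : Type*}
    [LinearOrder Y] [TopologicalSpace Y] [ClosedIicTopology Y]
    {F : ι → X → Y} {f g : X → Y} {c s : X}
    (hK : BddAbove K) (hF : ∀ x ∈ K, Tendsto (F · x) l (nhds (f x)))
    (hs : s ∈ closure {x ∈ K | g x < f x}) (hcs : c < s) :
    ∀ᶠ i in l, c < sSup {x ∈ K | g x ≤ F i x} := by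
  obtain ⟨x, hcx, hxK, hgf⟩ := mem_closure_iff.1 hs (Ioi c) isOpen_Ioi hcs
  filter_upwards [(hF x hxK).eventually_const_lt hgf] with i hi
  exact lt_csSup_of_lt (hK.mono (sep_subset _ _)) ⟨hxK, hi.le⟩ hcx

variable [OrderTopology X] {F : ι → X → ℝ} {f g : X → ℝ}

theorem eventually_sSup_setOf_le_lt {c : X} (hK : IsCompact K)
    (hf : UpperSemicontinuousOn f K) (hg : LowerSemicontinuousOn g K)
    (hF : TendstoUniformlyOn F f l K) (hne : ∀ᶠ i in l, {x ∈ K | g x ≤ F i x}.Nonempty)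
    (hc : sSup {x ∈ K | g x ≤ f x} < c) :
    ∀ᶠ i in l, sSup {x ∈ K | g x ≤ F i x} < c := by
  obtain ⟨d, hd, e, hec, hde⟩ := hc.exists_disjoint_Iio_Ioi
  have hsub : K ∩ Ici d ⊆ K := inter_subset_left
  have hfg : ∀ x ∈ K ∩ Ici d, f x < g x := fun x hx ↦ not_le.1 fun hle ↦
    notMem_of_csSup_lt (hd.trans_le hx.2) (hK.bddAbove.mono (sep_subset _ _)) ⟨hx.1, hle⟩
  filter_upwards [hne, eventually_forall_lt_of_isCompact (hK.inter_right isClosed_Ici)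
    (hf.mono hsub) (hg.mono hsub) (hF.mono hsub) hfg] with i hi hlt
  have hle : ∀ x ∈ {x ∈ K | g x ≤ F i x}, x ≤ e := by
    rintro x ⟨hxK, hgF⟩
    have hxd : x < d := lt_of_not_ge fun hdx ↦ (hlt x ⟨hxK, hdx⟩).not_ge hgF
    exact le_of_not_gt fun hex ↦ (hde x hxd x hex).false
  exact (csSup_le hi hle).trans_lt hec

theorem bk_tendsto_alphaStar_general (hK : IsCompact K)
    (hf : UpperSemicontinuousOn f K) (hg : LowerSemicontinuousOn g K)
    (hF : TendstoUniformlyOn F f l K) (hne : ∀ᶠ i in l, {x ∈ K | g x ≤ F i x}.Nonempty)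
    (hcross : sInf K < sSup {x ∈ K | g x ≤ f x} →
      sSup {x ∈ K | g x ≤ f x} ∈ closure {x ∈ K | g x < f x}) :
    Tendsto (fun i ↦ sSup {x ∈ K | g x ≤ F i x}) l (nhds (sSup {x ∈ K | g x ≤ f x})) := by
  refine tendsto_order.2 ⟨fun c hc ↦ ?_, fun c ↦ eventually_sSup_setOf_le_lt hK hf hg hF hne⟩
  rcases le_or_gt (sSup {x ∈ K | g x ≤ f x}) (sInf K) with hle | hlt
  · filter_upwards [hne] with i ⟨x, hx⟩
    calc c < sSup {x ∈ K | g x ≤ f x} := hc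
      _ ≤ sInf K := hle
      _ ≤ x := csInf_le hK.bddBelow hx.1
      _ ≤ sSup {x ∈ K | g x ≤ F i x} := le_csSup (hK.bddAbove.mono (sep_subset _ _)) hx
  · exact eventually_lt_sSup_setOf_le_of_mem_closure hK.bddAbove (fun _ ↦ hF.tendsto_at)
      (hcross hlt) hc

end Convergence

/-- Under assumption (a2), the finite-grid BH thresholds `b k` converge to the
adjusted threshold `α*`.  Here `a : [0,1] → [0,1]` is continuous, the `a_k` converge uniformly
to `a` on `[0,1]`, `α* = sup {r ∈ [0,1] : a r ≥ r/α}` and `b k = sup {r ∈ [0,1] : a_k r ≥ r/α}`. -/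
theorem bk_tendsto_alphaStar
    (α : ℝ) (hα : α ∈ Set.Ioo (0:ℝ) 1)
    (a : ℝ → ℝ) (ha_cont : ContinuousOn a (Set.Icc 0 1))
    (ha_maps : Set.MapsTo a (Set.Icc 0 1) (Set.Icc 0 1))
    (ak : ℕ → ℝ → ℝ) (hak_maps : ∀ k, Set.MapsTo (ak k) (Set.Icc 0 1) (Set.Icc 0 1))
    (hunif : TendstoUniformlyOn ak a atTop (Set.Icc 0 1))
    (αStar : ℝ) (hαStar : αStar = sSup {r ∈ Set.Icc (0:ℝ) 1 | r / α ≤ a r})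
    (b : ℕ → ℝ) (hb : ∀ k, b k = sSup {r ∈ Set.Icc (0:ℝ) 1 | r / α ≤ ak k r})
    (ha2 : 0 < αStar → ∀ O : Set ℝ, IsOpen O → αStar ∈ O →
      ∃ s₁ ∈ O ∩ Set.Icc (0:ℝ) 1, ∃ s₂ ∈ O ∩ Set.Icc (0:ℝ) 1,
        s₁ / α < a s₁ ∧ a s₂ < s₂ / α) :
    Tendsto b atTop (nhds αStar) := by
  obtain rfl : b = _ := funext hb
  subst hαStar
  have hline : ContinuousOn (fun r : ℝ ↦ r / α) (Icc 0 1) := by fun_prop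
  have hne (k : ℕ) : {r ∈ Icc (0 : ℝ) 1 | r / α ≤ ak k r}.Nonempty :=
    ⟨0, by simp, by simpa using (hak_maps k (by simp)).1⟩
  refine bk_tendsto_alphaStar_general isCompact_Icc ha_cont.upperSemicontinuousOn
    hline.lowerSemicontinuousOn hunif (.of_forall hne) fun hpos ↦ mem_closure_iff.2 fun O hO hs ↦ ?_
  obtain ⟨s₁, ⟨hs₁O, hs₁⟩, -, -, habove, -⟩ := ha2 (by simpa using hpos) O hO hs
  exact ⟨s₁, hs₁O, hs₁, habove⟩
end

section
/- Assume (G1) and (a1)–(a3) hold. Then for every t ∈ ⋃_m S_m with p(t) ≠ α*, the sequence of truth values of the event (t ∈ S_k and p(t) ≤ b_k) is eventually constant in k; that is, the null hypothesis at t is eventually always rejected, or eventually always accepted, by the step-k Benjamini–Hochberg procedures. -/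
/-!
On a compact set where an upper semicontinuous `F` stays below a lower semicontinuous `c`, it does
so by a positive margin, which uniform approximation preserves; hence thresholds of approximations
cannot stay above that of the limit. From below, a strict crossing point arbitrarily close to the
limiting threshold remains a crossing point of every late approximation. So the step-`k` thresholds
converge to `α*`, and for `p t ≠ α*` they eventually stay on one side of `p t`. The margin argument
applies to the cumulated p-value function because it is a uniform limit of empirical distribution
functions, which are upper semicontinuous.
-/

open Filter Set MeasureTheory
open scoped Classical

open scoped Topology

section Semicontinuity

variable {X : Type*} [TopologicalSpace X] {s : Set X} {f : X → ℝ}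

theorem upperSemicontinuousOn_of_tendstoUniformlyOn {ι : Type*} {l : Filter ι} {F : ι → X → ℝ}
    (hFf : TendstoUniformlyOn F f l s) (hF : ∃ᶠ i in l, UpperSemicontinuousOn (F i) s) :
    UpperSemicontinuousOn f s := by
  intro x hx y hy
  have hε : 0 < (y - f x) / 2 := by linarith
  obtain ⟨i, husc, hclose⟩ :=
    (hF.and_eventually (Metric.tendstoUniformlyOn_iff.1 hFf _ hε)).exists
  have hlt : ∀ z ∈ s, |f z - F i z| < (y - f x) / 2 := hclose
  have hx_lt : F i x < (f x + y) / 2 := by linarith [abs_lt.1 (hlt x hx)]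
  filter_upwards [husc x hx _ hx_lt, self_mem_nhdsWithin] with z hz hzs
  linarith [abs_lt.1 (hlt z hzs)]

theorem exists_pos_forall_add_le_of_semicontinuousOn {g : X → ℝ} (hs : IsCompact s)
    (hf : UpperSemicontinuousOn f s) (hg : LowerSemicontinuousOn g s)
    (hfg : ∀ x ∈ s, f x < g x) : ∃ δ > 0, ∀ x ∈ s, f x + δ ≤ g x := by
  rcases s.eq_empty_or_nonempty with rfl | hne
  · exact ⟨1, one_pos, by simp⟩
  · have hneg : UpperSemicontinuousOn (fun x ↦ -g x) s :=
      continuous_neg.comp_lowerSemicontinuousOn_antitone hg fun _ _ ↦ neg_le_neg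
    obtain ⟨x₀, hx₀, hmax⟩ := (hf.add hneg).exists_isMaxOn hne hs
    refine ⟨g x₀ - f x₀, sub_pos.2 (hfg x₀ hx₀), fun x hx ↦ ?_⟩
    have : f x + -g x ≤ f x₀ + -g x₀ := hmax hx
    linarith

end Semicontinuity

/-- The proportion of points of the finite grid `S` at which the p-value is at most `r`, the
paper's `a_k(r)` for `S = S_k`; it is `0` when `S` is empty. -/
noncomputable def empiricalCDF {Ω : Type*} (S : Finset Ω) (p : Ω → ℝ) (r : ℝ) : ℝ :=
  (S.filter (fun s ↦ p s ≤ r)).card / S.card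

theorem upperSemicontinuous_empiricalCDF {Ω : Type*} (S : Finset Ω) (p : Ω → ℝ) :
    UpperSemicontinuous (empiricalCDF S p) := by
  intro r y hy
  have hstay_above : ∀ᶠ r' in 𝓝 r, ∀ s ∈ S, r < p s → r' < p s :=
    S.eventually_all.2 fun _ _ ↦ eventually_imp_distrib_left.2 fun h ↦ eventually_lt_nhds h
  filter_upwards [hstay_above] with r' hr'
  have hsub : S.filter (fun s ↦ p s ≤ r') ⊆ S.filter (fun s ↦ p s ≤ r) := by grind
  refine lt_of_le_of_lt ?_ hy
  unfold empiricalCDF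
  gcongr

/-- The threshold of the step-up procedure with rejection curve `c` applied to the distribution
function `F` of the p-values: the supremum of the points of `[0, 1]` at which `F` is not below
`c`. If there is no such point, the value is `sSup ∅ = 0`. The Benjamini–Hochberg procedure at level
`α` has `c r = r / α`; its thresholds are the paper's `b_k` for `F = a_k` and `α*` for `F = a`. -/
noncomputable def stepUpThreshold (c F : ℝ → ℝ) : ℝ :=
  sSup {r ∈ Icc (0 : ℝ) 1 | c r ≤ F r}

section StepUpThreshold

variable {c F : ℝ → ℝ}

theorem stepUpThreshold_nonneg : 0 ≤ stepUpThreshold c F :=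
  Real.sSup_nonneg fun _ hr ↦ hr.1.1

theorem le_stepUpThreshold {r : ℝ} (hr : r ∈ Icc (0 : ℝ) 1) (hcF : c r ≤ F r) :
    r ≤ stepUpThreshold c F :=
  le_csSup ⟨1, fun _ hx ↦ hx.1.2⟩ ⟨hr, hcF⟩

theorem stepUpThreshold_le {q : ℝ} (hq : 0 ≤ q) (hFc : ∀ r ∈ Icc 0 1, q < r → F r < c r) :
    stepUpThreshold c F ≤ q :=
  Real.sSup_le (fun r hr ↦ not_lt.1 fun hqr ↦ (hFc r hr.1 hqr).not_ge hr.2) hq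

theorem stepUpThreshold_div_le {α : ℝ} (hα : 0 < α) (hF : ∀ r ∈ Icc 0 1, F r ≤ 1) :
    stepUpThreshold (· / α) F ≤ α :=
  stepUpThreshold_le hα.le fun r hr hαr ↦ (hF r hr).trans_lt ((one_lt_div hα).2 hαr)

variable {ι : Type*} {l : Filter ι} {Fₙ : ι → ℝ → ℝ}

theorem eventually_le_stepUpThreshold {r : ℝ} (hr : r ∈ Icc (0 : ℝ) 1)
    (hFₙ : Tendsto (Fₙ · r) l (𝓝 (F r))) (hcF : c r < F r) :
    ∀ᶠ i in l, r ≤ stepUpThreshold c (Fₙ i) :=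
  (hFₙ.eventually_const_lt hcF).mono fun _ hi ↦ le_stepUpThreshold hr hi.le

theorem eventually_stepUpThreshold_lt {q : ℝ} (hc : LowerSemicontinuousOn c (Icc 0 1))
    (hF : UpperSemicontinuousOn F (Icc 0 1)) (hFₙ : TendstoUniformlyOn Fₙ F l (Icc 0 1))
    (hq : stepUpThreshold c F < q) : ∀ᶠ i in l, stepUpThreshold c (Fₙ i) < q := by
  obtain ⟨q', hFq', hq'q⟩ := exists_between hq
  have hq'₀ : 0 ≤ q' := stepUpThreshold_nonneg.trans hFq'.le
  have hsub : Icc q' 1 ⊆ Icc 0 1 := Icc_subset_Icc_left hq'₀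
  have hbelow : ∀ r ∈ Icc q' 1, F r < c r := fun r hr ↦ not_le.1 fun hcF ↦
    (le_stepUpThreshold (hsub hr) hcF).not_gt (hFq'.trans_le hr.1)
  obtain ⟨δ, hδ, hgap⟩ := exists_pos_forall_add_le_of_semicontinuousOn isCompact_Icc
    (hF.mono hsub) (hc.mono hsub) hbelow
  filter_upwards [Metric.tendstoUniformlyOn_iff.1 hFₙ δ hδ] with i hi
  refine (stepUpThreshold_le hq'₀ fun r hr hqr ↦ ?_).trans_lt hq'q
  have hclose : |F r - Fₙ i r| < δ := hi r hr
  linarith [abs_lt.1 hclose, hgap r ⟨hqr.le, hr.2⟩]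

theorem tendsto_stepUpThreshold (hc : LowerSemicontinuousOn c (Icc 0 1))
    (hF : UpperSemicontinuousOn F (Icc 0 1)) (hFₙ : TendstoUniformlyOn Fₙ F l (Icc 0 1))
    (hcross : 0 < stepUpThreshold c F →
      ∃ᶠ r in 𝓝[Icc 0 1] (stepUpThreshold c F), c r < F r) :
    Tendsto (fun i ↦ stepUpThreshold c (Fₙ i)) l (𝓝 (stepUpThreshold c F)) := by
  refine tendsto_order.2 ⟨fun q hq ↦ ?_, fun q ↦ eventually_stepUpThreshold_lt hc hF hFₙ⟩
  rcases stepUpThreshold_nonneg.eq_or_lt with hzero | hpos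
  · exact .of_forall fun _ ↦ (hq.trans_eq hzero.symm).trans_le stepUpThreshold_nonneg
  · obtain ⟨r, ⟨hcF, hr⟩, hqr⟩ := ((frequently_nhdsWithin_iff.1 (hcross hpos)).and_eventually
      (eventually_gt_nhds hq)).exists
    exact (eventually_le_stepUpThreshold hr (hFₙ.tendsto_at hr) hcF).mono fun _ ↦ hqr.trans_le

end StepUpThreshold

theorem fBH_eventually_rejected_or_accepted_general {Ω ι : Type*} [Preorder ι] [IsDirectedOrder ι]
    {p : Ω → ℝ} {S : ι → Finset Ω} (hS : Monotone S) {c a : ℝ → ℝ}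
    (hc : LowerSemicontinuousOn c (Icc 0 1))
    (ha : TendstoUniformlyOn (fun k ↦ empiricalCDF (S k) p) a atTop (Icc 0 1))
    (hcross : 0 < stepUpThreshold c a →
      ∃ᶠ r in 𝓝[Icc 0 1] (stepUpThreshold c a), c r < a r)
    {m : ι} {t : Ω} (ht : t ∈ S m) (hne : p t ≠ stepUpThreshold c a) :
    EventuallyConst (fun k ↦ t ∈ S k ∧ p t ≤ stepUpThreshold c (empiricalCDF (S k) p)) atTop := by
  have : Nonempty ι := ⟨m⟩
  have husc : UpperSemicontinuousOn a (Icc 0 1) := upperSemicontinuousOn_of_tendstoUniformlyOn ha <|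
    .of_forall fun k ↦ (upperSemicontinuous_empiricalCDF (S k) p).upperSemicontinuousOn _
  have hlim := tendsto_stepUpThreshold hc husc ha hcross
  refine eventuallyConst_pred.2 (hne.lt_or_gt.imp (fun hlt ↦ ?_) fun hgt ↦ ?_)
  · filter_upwards [eventually_ge_atTop m, hlim.eventually_const_lt hlt] with k hmk hk
    exact ⟨hS hmk ht, hk.le⟩
  · exact (hlim.eventually_lt_const hgt).mono fun k hk hrej ↦ hk.not_ge hrej.2

/-- under the grid approximation assumption (G1) and the regularity assumptions
(a1)–(a3), for every grid point `t ∈ ⋃ m, S m` with `p t ≠ α*`, the event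
`(t ∈ S k ∧ p t ≤ b k)` is eventually constant in `k`: the null hypothesis at `t` is eventually
always rejected, or eventually always accepted, by the step-`k` BH procedures. -/
theorem fBH_eventually_rejected_or_accepted {d : ℕ}
    (T : Set (EuclideanSpace ℝ (Fin d)))
    (hT_open : IsOpen T) (hT_bdd : Bornology.IsBounded T) (hT_ne : T.Nonempty)
    (hT_norm : volume T = 1)
    (p : EuclideanSpace ℝ (Fin d) → ℝ) (hp_meas : Measurable p)
    (hp_val : ∀ t ∈ T, p t ∈ Set.Icc (0:ℝ) 1)
    (α : ℝ) (hα : α ∈ Set.Ioo (0:ℝ) 1)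
    -- cumulated p-value function and adjusted threshold
    (a : ℝ → ℝ) (ha : ∀ r, a r = (volume {s ∈ T | p s ≤ r}).toReal)
    (αStar : ℝ) (hαStar : αStar = sSup {r ∈ Set.Icc (0:ℝ) 1 | r / α ≤ a r})
    -- nested grids and empirical quantities
    (S : ℕ → Finset (EuclideanSpace ℝ (Fin d)))
    (hS_ne : ∀ k, (S k).Nonempty) (hS_sub : ∀ k, ↑(S k) ⊆ T)
    (hS_mono : ∀ k, S k ⊆ S (k + 1))
    (ak : ℕ → ℝ → ℝ)
    (hak : ∀ k r, ak k r = (((S k).filter (fun s => p s ≤ r)).card : ℝ) / (S k).card)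
    (b : ℕ → ℝ) (hb : ∀ k, b k = sSup {r ∈ Set.Icc (0:ℝ) 1 | r / α ≤ ak k r})
    -- (G1)
    (hG1 : TendstoUniformlyOn ak a atTop (Set.Icc 0 1))
    -- (a1)
    (ha1 : ∀ t ∈ Set.Icc (0:ℝ) 1, volume {s ∈ T | p s = t} = 0)
    -- (a2)
    (ha2 : αStar ∈ Set.Ioc 0 α → ∀ O : Set ℝ, IsOpen O → αStar ∈ O →
      ∃ s₁ ∈ O ∩ Set.Icc (0:ℝ) 1, ∃ s₂ ∈ O ∩ Set.Icc (0:ℝ) 1,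
        s₁ / α < a s₁ ∧ a s₂ < s₂ / α)
    -- (a3)
    (ha3 : αStar = 0 → 0 < sInf (p '' T)) :
    ∀ t ∈ ⋃ m, (S m : Set (EuclideanSpace ℝ (Fin d))), p t ≠ αStar →
      (∃ K, ∀ k ≥ K, t ∈ S k ∧ p t ≤ b k) ∨
      (∃ K, ∀ k ≥ K, ¬(t ∈ S k ∧ p t ≤ b k)) := by
  have hcdf (k) : ak k = empiricalCDF (S k) p := funext (hak k)
  have ha_le_one (r) : a r ≤ 1 := by
    rw [ha]
    exact ENNReal.toReal_mono ENNReal.one_ne_top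
      ((measure_mono (sep_subset T _)).trans_eq hT_norm)
  change αStar = stepUpThreshold (· / α) a at hαStar
  have hαStar_le : αStar ≤ α := hαStar ▸ stepUpThreshold_div_le hα.1 fun r _ ↦ ha_le_one r
  have hcross (hpos : 0 < αStar) : ∃ᶠ r in 𝓝[Icc 0 1] αStar, r / α < a r :=
    (nhdsWithin_basis_open αStar _).frequently_iff.2 fun O ⟨hmem, hO⟩ ↦
      have ⟨r, hr, _, _, hlt, _⟩ := ha2 ⟨hpos, hαStar_le⟩ O hO hmem
      ⟨r, hr, hlt⟩
  have hline : Continuous fun r : ℝ ↦ r / α := continuous_id.div_const α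
  intro t ht hne
  obtain ⟨m, hm⟩ := mem_iUnion.1 ht
  have hconst := fBH_eventually_rejected_or_accepted_general (monotone_nat_of_le_succ hS_mono)
    hline.continuousOn.lowerSemicontinuousOn (funext hcdf ▸ hG1) (hαStar ▸ hcross) hm (hαStar ▸ hne)
  simpa only [eventuallyConst_pred, eventually_atTop, hb, hcdf, stepUpThreshold] using hconst
end

section
/- Assume (G1), (G2) and (a1)–(a3) hold. Then #A_k/#S_k → μ({t ∈ T : p(t) ≤ α*}) and #(A_k ∩ U)/#S_k → μ(U ∩ {t ∈ T : p(t) ≤ α*}) as k → ∞. -/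
open Filter Set MeasureTheory
open scoped Classical

/-!
The threshold `b k` is the last point of `[0, 1]` at which `ak k` still lies on or above the line
`r ↦ r / α`. By (a1) the limit curve `a` is continuous, so beyond `αStar` its distance below the
line is bounded away from zero on compact sets, and uniform convergence leaves no room for a late
crossing of `ak k`. If `αStar > 0`, then by (a2) `a` is strictly above the line at points
arbitrarily close to `αStar`, and at each of them so is `ak k` for large `k`; if `αStar = 0`, then
`b k ≥ αStar` anyway. Hence `b k → αStar`, and evaluating the uniformly convergent proportions at
`b k` gives both limits.
-/

open scoped Topology

section Continuity

variable {X R : Type*} [MeasurableSpace X]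
  [LinearOrder R] [TopologicalSpace R] [OrderClosedTopology R]

theorem eventually_le_iff_le_of_ne {x t : R} (h : x ≠ t) : ∀ᶠ r in 𝓝 t, x ≤ r ↔ x ≤ t := by
  rcases h.lt_or_gt with hxt | htx
  · filter_upwards [Ioi_mem_nhds hxt] with r (hr : x < r) using iff_of_true hr.le hxt.le
  · filter_upwards [Iio_mem_nhds htx] with r (hr : r < x) using iff_of_false hr.not_ge htx.not_ge

variable [FirstCountableTopology R] [MeasurableSpace R] [OpensMeasurableSpace R]
  {μ : Measure X} {p : X → R} {V : Set X} {t : R}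

theorem continuousAt_measureReal_setOf_le [IsFiniteMeasure μ] (hp : Measurable p)
    (ht : μ {x | p x = t} = 0) : ContinuousAt (fun r => μ.real {x | p x ≤ r}) t := by
  have hmeas (r : R) : MeasurableSet {x | p x ≤ r} := hp measurableSet_Iic
  have hne : ∀ᵐ x ∂μ, p x ≠ t := measure_eq_zero_iff_ae_notMem.1 ht
  refine (ENNReal.tendsto_toReal (measure_ne_top μ _)).comp ?_
  exact tendsto_measure_of_ae_tendsto_indicator_of_isFiniteMeasure (𝓝 t) (hmeas t) hmeas
    (hne.mono fun _ => eventually_le_iff_le_of_ne)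

theorem continuousAt_measureReal_inter_setOf_le (hp : Measurable p) (hV : μ V ≠ ⊤)
    (ht : μ (V ∩ {x | p x = t}) = 0) : ContinuousAt (fun r => μ.real (V ∩ {x | p x ≤ r})) t := by
  have : IsFiniteMeasure (μ.restrict V) := isFiniteMeasure_restrict.2 hV
  have hrestrict (r : R) : (μ.restrict V).real {x | p x ≤ r} = μ.real (V ∩ {x | p x ≤ r}) := by
    have hmeas : MeasurableSet {x | p x ≤ r} := hp measurableSet_Iic
    rw [measureReal_restrict_apply hmeas, inter_comm]
  have hlevel : MeasurableSet {x | p x = t} := hp (measurableSet_singleton t)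
  simp only [← hrestrict]
  refine continuousAt_measureReal_setOf_le hp ?_
  rwa [Measure.restrict_apply hlevel, inter_comm]

end Continuity

theorem eventually_forall_lt_of_tendstoUniformlyOn {ι Y : Type*} [TopologicalSpace Y] {K : Set Y}
    {F : ι → Y → ℝ} {f g : Y → ℝ} {l : Filter ι} (hK : IsCompact K)
    (hF : TendstoUniformlyOn F f l K) (hf : ContinuousOn f K) (hg : ContinuousOn g K)
    (hfg : ∀ y ∈ K, f y < g y) : ∀ᶠ i in l, ∀ y ∈ K, F i y < g y := by
  obtain ⟨δ, hδ, hgap⟩ := hK.exists_forall_le' (hg.sub hf) fun y hy => sub_pos.2 (hfg y hy)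
  filter_upwards [Metric.tendstoUniformlyOn_iff.1 hF δ hδ] with i hi y hy
  have hclose : -δ < f y - F i y := (abs_lt.1 (hi y hy)).1
  have hgap_y : δ ≤ g y - f y := hgap y hy
  linarith

/-- The supremum of the points of `K` at which `f` lies on or above the boundary curve `β`: with
`K = [0, 1]` and `β r = r / α` it is the rejection threshold of the Benjamini–Hochberg procedure
for the cumulated p-value function `f`. Without such points it takes the junk value `sSup ∅ = 0`. -/
noncomputable def lastCrossing (K : Set ℝ) (β f : ℝ → ℝ) : ℝ :=
  sSup {r ∈ K | β r ≤ f r}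

section LastCrossing

variable {ι : Type*} {l : Filter ι} {K : Set ℝ} {β f : ℝ → ℝ} {F : ι → ℝ → ℝ} {r c : ℝ}

theorem le_lastCrossing (hK : BddAbove K) (hr : r ∈ K) (h : β r ≤ f r) :
    r ≤ lastCrossing K β f :=
  le_csSup (hK.mono (sep_subset K _)) ⟨hr, h⟩

theorem lastCrossing_le (hne : ∃ r ∈ K, β r ≤ f r) (h : ∀ r ∈ K, β r ≤ f r → r ≤ c) :
    lastCrossing K β f ≤ c :=
  csSup_le hne fun r hr => h r hr.1 hr.2

theorem lastCrossing_mem (hK : IsCompact K) (hne : ∃ r ∈ K, β r ≤ f r) :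
    lastCrossing K β f ∈ K :=
  closure_minimal (sep_subset K _) hK.isClosed
    (csSup_mem_closure hne (hK.bddAbove.mono (sep_subset K _)))

theorem eventually_le_lastCrossing (hK : BddAbove K) (hr : r ∈ K) (hstrict : β r < f r)
    (hF : Tendsto (fun i => F i r) l (𝓝 (f r))) : ∀ᶠ i in l, r ≤ lastCrossing K β (F i) :=
  (hF.eventually_const_lt hstrict).mono fun _ hi => le_lastCrossing hK hr hi.le

theorem eventually_lastCrossing_le (hK : IsCompact K) (hβ : ContinuousOn β K)
    (hf : ContinuousOn f K) (hF : TendstoUniformlyOn F f l K)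
    (hne : ∀ i, ∃ r ∈ K, β r ≤ F i r) (hc : lastCrossing K β f < c) :
    ∀ᶠ i in l, lastCrossing K β (F i) ≤ c := by
  have hsub : K ∩ Ici c ⊆ K := inter_subset_left
  have hbelow : ∀ r ∈ K ∩ Ici c, f r < β r := fun r hr =>
    not_le.1 fun h => (hc.trans_le hr.2).not_ge (le_lastCrossing hK.bddAbove hr.1 h)
  filter_upwards [eventually_forall_lt_of_tendstoUniformlyOn (hK.inter_right isClosed_Ici)
    (hF.mono hsub) (hf.mono hsub) (hβ.mono hsub) hbelow] with i hi
  refine lastCrossing_le (hne i) fun r hr hcross => ?_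
  by_contra! hcr
  exact (hi r ⟨hr, hcr.le⟩).not_ge hcross

theorem tendsto_lastCrossing (hK : IsCompact K) (hβ : ContinuousOn β K) (hf : ContinuousOn f K)
    (hF : TendstoUniformlyOn F f l K) (hne : ∀ i, ∃ r ∈ K, β r ≤ F i r)
    (hstrict : lastCrossing K β f ∈ lowerBounds K ∨
      ∀ c < lastCrossing K β f, ∃ r ∈ K, c < r ∧ β r < f r) :
    Tendsto (fun i => lastCrossing K β (F i)) l (𝓝 (lastCrossing K β f)) := by
  refine tendsto_order.2 ⟨fun c hc => ?_, fun c hc => ?_⟩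
  · rcases hstrict with hleast | hstrict
    · exact Eventually.of_forall fun i => hc.trans_le (hleast (lastCrossing_mem hK (hne i)))
    · obtain ⟨r, hr, hcr, hβr⟩ := hstrict c hc
      exact (eventually_le_lastCrossing hK.bddAbove hr hβr (hF.tendsto_at hr)).mono
        fun i hi => hcr.trans_le hi
  · obtain ⟨c', hc', hc'c⟩ := exists_between hc
    exact (eventually_lastCrossing_le hK hβ hf hF hne hc').mono fun i hi => hi.trans_lt hc'c

theorem exists_mem_Icc_div_le (α : ℝ) (hf : 0 ≤ f 0) : ∃ r ∈ Icc (0 : ℝ) 1, r / α ≤ f r :=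
  ⟨0, left_mem_Icc.2 zero_le_one, by rwa [zero_div]⟩

theorem lastCrossing_div_le {α : ℝ} (hα : 0 < α) (hne : ∃ r ∈ K, r / α ≤ f r)
    (hf : ∀ r ∈ K, f r ≤ 1) : lastCrossing K (· / α) f ≤ α :=
  lastCrossing_le hne fun r hr hcross => (div_le_one hα).1 (hcross.trans (hf r hr))

end LastCrossing

theorem fBH_rejection_proportions_tendsto_general {X ι : Type*} [MeasurableSpace X]
    {μ : Measure X} {l : Filter ι} {T : Set X} (hT : μ T ≤ 1) {p : X → ℝ} (hp : Measurable p)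
    {α : ℝ} (hα : 0 < α)
    {a : ℝ → ℝ} (ha : ∀ r, a r = μ.real {s ∈ T | p s ≤ r})
    {αStar : ℝ} (hαStar : αStar = lastCrossing (Icc 0 1) (· / α) a)
    {S : ι → Finset X} (_hS_ne : ∀ k, (S k).Nonempty)
    {ak : ι → ℝ → ℝ}
    (hak : ∀ k r, ak k r = (((S k).filter (fun s => p s ≤ r)).card : ℝ) / (S k).card)
    {b : ι → ℝ} (hb : ∀ k, b k = lastCrossing (Icc 0 1) (· / α) (ak k))
    (hG1 : TendstoUniformlyOn ak a l (Icc 0 1))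
    {U : Set X} (hU : U ⊆ T)
    {aU : ℝ → ℝ} (haU : ∀ r, aU r = μ.real (U ∩ {s | p s ≤ r}))
    {aUk : ι → ℝ → ℝ}
    (haUk : ∀ k r, aUk k r = (((S k).filter (fun s => s ∈ U ∧ p s ≤ r)).card : ℝ) / (S k).card)
    (hG2 : TendstoUniformlyOn aUk aU l (Icc 0 1))
    (ha1 : ∀ t ∈ Icc (0 : ℝ) 1, μ {s ∈ T | p s = t} = 0)
    (ha2 : αStar ∈ Ioc 0 α → ∀ c < αStar, ∃ r ∈ Icc (0 : ℝ) 1, c < r ∧ r / α < a r)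
    {A : ι → Finset X} (hA : ∀ k, A k = (S k).filter (fun t => p t ≤ b k)) :
    Tendsto (fun k => ((A k).card : ℝ) / (S k).card) l (𝓝 (μ.real {t ∈ T | p t ≤ αStar})) ∧
    Tendsto (fun k => (((A k).filter (fun t => t ∈ U)).card : ℝ) / (S k).card) l
      (𝓝 (μ.real (U ∩ {t | p t ≤ αStar}))) := by
  have hT_fin : μ T ≠ ⊤ := ne_top_of_le_ne_top ENNReal.one_ne_top hT
  have hU_fin : μ U ≠ ⊤ := ne_top_of_le_ne_top hT_fin (measure_mono hU)
  have ha_cont : ContinuousOn a (Icc 0 1) := funext ha ▸ fun t ht =>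
    (continuousAt_measureReal_inter_setOf_le hp hT_fin (ha1 t ht)).continuousWithinAt
  have haU_cont : ContinuousOn aU (Icc 0 1) := funext haU ▸ fun t ht =>
    (continuousAt_measureReal_inter_setOf_le hp hU_fin
      (measure_mono_null (inter_subset_inter_left _ hU) (ha1 t ht))).continuousWithinAt
  have ha_le (r : ℝ) : a r ≤ 1 := ha r ▸
    ENNReal.toReal_mono ENNReal.one_ne_top ((measure_mono (sep_subset T _)).trans hT)
  have ha_cross := exists_mem_Icc_div_le α (ha 0 ▸ measureReal_nonneg)
  have hak_cross (k : ι) := exists_mem_Icc_div_le α (f := ak k) (by rw [hak]; positivity)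
  have hαStar_mem : αStar ∈ Icc 0 1 := hαStar ▸ lastCrossing_mem isCompact_Icc ha_cross
  have hαStar_le : αStar ≤ α := hαStar ▸ lastCrossing_div_le hα ha_cross fun r _ => ha_le r
  have hb_mem (k : ι) : b k ∈ Icc 0 1 := hb k ▸ lastCrossing_mem isCompact_Icc (hak_cross k)
  have hstrict : αStar ∈ lowerBounds (Icc 0 1) ∨
      ∀ c < αStar, ∃ r ∈ Icc (0 : ℝ) 1, c < r ∧ r / α < a r :=
    hαStar_mem.1.eq_or_lt.imp (fun h _ hr => h.ge.trans hr.1) fun h => ha2 ⟨h, hαStar_le⟩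
  have hb_lim : Tendsto b l (𝓝 αStar) := by
    subst hαStar
    exact funext hb ▸ tendsto_lastCrossing isCompact_Icc (by fun_prop) ha_cont hG1 hak_cross hstrict
  have hb_within : Tendsto b l (𝓝[Icc 0 1] αStar) :=
    tendsto_nhdsWithin_iff.2 ⟨hb_lim, Eventually.of_forall hb_mem⟩
  constructor
  · simpa only [hA, ha, hak] using hG1.tendsto_comp (ha_cont _ hαStar_mem) hb_within
  · simpa only [hA, haU, haUk, Finset.filter_filter, and_comm] using
      hG2.tendsto_comp (haU_cont _ hαStar_mem) hb_within

/-- under the grid approximation assumptions (G1), (G2) and the regularity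
assumptions (a1)–(a3), the proportions of rejected grid points converge:
`#A_k/#S_k → μ {t ∈ T : p t ≤ α*}` and `#(A_k ∩ U)/#S_k → μ (U ∩ {t : p t ≤ α*})`,
where `A_k = {t ∈ S_k : p t ≤ b_k}` is the step-`k` rejection set. -/
theorem fBH_rejection_proportions_tendsto {d : ℕ}
    (T : Set (EuclideanSpace ℝ (Fin d)))
    (hT_open : IsOpen T) (hT_bdd : Bornology.IsBounded T) (hT_ne : T.Nonempty)
    (hT_norm : volume T = 1)
    (p : EuclideanSpace ℝ (Fin d) → ℝ) (hp_meas : Measurable p)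
    (hp_val : ∀ t ∈ T, p t ∈ Set.Icc (0:ℝ) 1)
    (α : ℝ) (hα : α ∈ Set.Ioo (0:ℝ) 1)
    -- cumulated p-value function and adjusted threshold
    (a : ℝ → ℝ) (ha : ∀ r, a r = (volume {s ∈ T | p s ≤ r}).toReal)
    (αStar : ℝ) (hαStar : αStar = sSup {r ∈ Set.Icc (0:ℝ) 1 | r / α ≤ a r})
    -- nested grids and empirical quantities
    (S : ℕ → Finset (EuclideanSpace ℝ (Fin d)))
    (hS_ne : ∀ k, (S k).Nonempty) (hS_sub : ∀ k, ↑(S k) ⊆ T)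
    (hS_mono : ∀ k, S k ⊆ S (k + 1))
    (ak : ℕ → ℝ → ℝ)
    (hak : ∀ k r, ak k r = (((S k).filter (fun s => p s ≤ r)).card : ℝ) / (S k).card)
    (b : ℕ → ℝ) (hb : ∀ k, b k = sSup {r ∈ Set.Icc (0:ℝ) 1 | r / α ≤ ak k r})
    -- (G1)
    (hG1 : TendstoUniformlyOn ak a atTop (Set.Icc 0 1))
    -- true-null region and (G2)
    (U : Set (EuclideanSpace ℝ (Fin d))) (hU_sub : U ⊆ T) (hU_meas : MeasurableSet U)
    (aU : ℝ → ℝ) (haU : ∀ r, aU r = (volume (U ∩ {s | p s ≤ r})).toReal)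
    (aUk : ℕ → ℝ → ℝ)
    (haUk : ∀ k r, aUk k r =
      (((S k).filter (fun s => s ∈ U ∧ p s ≤ r)).card : ℝ) / (S k).card)
    (hG2 : TendstoUniformlyOn aUk aU atTop (Set.Icc 0 1))
    -- (a1)
    (ha1 : ∀ t ∈ Set.Icc (0:ℝ) 1, volume {s ∈ T | p s = t} = 0)
    -- (a2)
    (ha2 : αStar ∈ Set.Ioc 0 α → ∀ O : Set ℝ, IsOpen O → αStar ∈ O →
      ∃ s₁ ∈ O ∩ Set.Icc (0:ℝ) 1, ∃ s₂ ∈ O ∩ Set.Icc (0:ℝ) 1,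
        s₁ / α < a s₁ ∧ a s₂ < s₂ / α)
    -- (a3)
    (ha3 : αStar = 0 → 0 < sInf (p '' T))
    -- step-k rejection sets
    (A : ℕ → Finset (EuclideanSpace ℝ (Fin d)))
    (hA : ∀ k, A k = (S k).filter (fun t => p t ≤ b k)) :
    Tendsto (fun k => ((A k).card : ℝ) / (S k).card) atTop
      (nhds (volume {t ∈ T | p t ≤ αStar}).toReal) ∧
    Tendsto (fun k => (((A k).filter (fun t => t ∈ U)).card : ℝ) / (S k).card) atTop
      (nhds (volume (U ∩ {t | p t ≤ αStar})).toReal) :=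
  fBH_rejection_proportions_tendsto_general hT_norm.le hp_meas hα.1 ha hαStar hS_ne hak hb hG1
    hU_sub haU haUk hG2 ha1 (fun h c hc => by
      obtain ⟨r, ⟨hcr, hr⟩, -, -, hlt, -⟩ := ha2 h (Ioi c) isOpen_Ioi hc
      exact ⟨r, hr, hcr, hlt⟩) hA
end

section
/- Assume (G1), (G2) and (a1)–(a3) hold. Then the step-k false discovery proportions of the finite Benjamini–Hochberg procedures converge to the limiting false discovery proportion of the functional Benjamini–Hochberg procedure: Q_k → Q as k → ∞. -/
open Filter Set MeasureTheory
open scoped Classical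

/-!
The finite procedures are the functional procedure run with the uniform measures on the grids, so
the theorem says that this procedure is stable in the measure. The cumulated p-value function is
upper semicontinuous, hence stays a positive distance below the line `r ↦ r / α` on any compact
interval to the right of the threshold; a uniform approximation cannot cross the line there. If the
threshold is positive, the points above the line close to it give the matching lower bound, the
thresholds converge, and the ratio passes to the limit because the limiting denominator is at least
the threshold divided by `α`. If the threshold is zero, the p-values are bounded away from it and
eventually nothing is rejected.
-/

open scoped Topology
open ProbabilityTheory

section Threshold

/-- The Benjamini–Hochberg threshold at level `α` of a function `F` on `[0, 1]`: the supremum of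
the points at which `F` is on or above the line `r ↦ r / α`, and `0` if there are none. With `F`
the cumulated p-value function it is the adjusted threshold `α*`, and with its empirical version on
the grid `S_k` it is `b_k`. -/
noncomputable def bhThreshold (α : ℝ) (F : ℝ → ℝ) : ℝ :=
  sSup {r ∈ Icc (0 : ℝ) 1 | r / α ≤ F r}

variable {α : ℝ} {F : ℝ → ℝ}

lemma bhThreshold_mem_Icc : bhThreshold α F ∈ Icc (0 : ℝ) 1 :=
  ⟨Real.sSup_nonneg fun _ hr => hr.1.1, Real.sSup_le (fun _ hr => hr.1.2) zero_le_one⟩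

lemma le_bhThreshold {r : ℝ} (hr : r ∈ Icc (0 : ℝ) 1) (h : r / α ≤ F r) : r ≤ bhThreshold α F :=
  le_csSup ⟨1, fun _ hs => hs.1.2⟩ ⟨hr, h⟩

lemma bhThreshold_le (hα : 0 < α) (hF : ∀ r, F r ≤ 1) : bhThreshold α F ≤ α :=
  Real.sSup_le (fun r hr => (div_le_one hα).1 (hr.2.trans (hF r))) hα.le

lemma bhThreshold_div_le (hα : 0 < α) (hmono : Monotone F) (hF₀ : 0 ≤ F 0) :
    bhThreshold α F / α ≤ F (bhThreshold α F) := by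
  rw [div_le_iff₀ hα]
  refine csSup_le ⟨0, by simp, by simpa using hF₀⟩ fun r hr => ?_
  exact ((div_le_iff₀ hα).1 hr.2).trans <| by gcongr; exact hmono (le_bhThreshold hr.1 hr.2)

variable {ι : Type*} {l : Filter ι} {G : ι → ℝ → ℝ}

lemma eventually_bhThreshold_lt (hF : UpperSemicontinuousOn F (Icc 0 1))
    (hG : TendstoUniformlyOn G F l (Icc 0 1)) {c : ℝ} (hc : bhThreshold α F < c) :
    ∀ᶠ i in l, bhThreshold α (G i) < c := by
  rcases lt_or_ge 1 c with h1c | hc1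
  · exact .of_forall fun i => bhThreshold_mem_Icc.2.trans_lt h1c
  obtain ⟨c', hTc', hc'c⟩ := exists_between hc
  have hc'₀ : 0 ≤ c' := bhThreshold_mem_Icc.1.trans hTc'.le
  have hsub : Icc c' 1 ⊆ Icc 0 1 := Icc_subset_Icc_left hc'₀
  have hline : Continuous fun r : ℝ => -(r / α) := by fun_prop
  have hgap : UpperSemicontinuousOn (fun r => F r + -(r / α)) (Icc c' 1) :=
    (hF.mono hsub).add (hline.upperSemicontinuous.upperSemicontinuousOn _)
  obtain ⟨x, hx, hmax⟩ := hgap.exists_isMaxOn (nonempty_Icc.2 (hc'c.le.trans hc1)) isCompact_Icc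
  have hFx : F x < x / α := by
    by_contra! h
    exact (hTc'.trans_le hx.1).not_ge (le_bhThreshold (hsub hx) h)
  filter_upwards [Metric.tendstoUniformlyOn_iff.1 hG _ (sub_pos.2 hFx)] with i hi
  refine (Real.sSup_le (fun r hr => ?_) hc'₀).trans_lt hc'c
  by_contra! hr'
  have hclose := (abs_lt.1 (hi r hr.1)).1
  have hbelow : F r + -(r / α) ≤ F x + -(x / α) := hmax ⟨hr'.le, hr.1.2⟩
  linarith [hr.2]

lemma eventually_lt_bhThreshold (hG : TendstoUniformlyOn G F l (Icc 0 1))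
    (hcross : ∃ᶠ s in 𝓝 (bhThreshold α F), s ∈ Icc (0 : ℝ) 1 ∧ s / α < F s) {c : ℝ}
    (hc : c < bhThreshold α F) : ∀ᶠ i in l, c < bhThreshold α (G i) := by
  obtain ⟨s, ⟨hs, hsF⟩, hcs⟩ := (hcross.and_eventually (lt_mem_nhds hc)).exists
  filter_upwards [(hG.tendsto_at hs).eventually_const_lt hsF] with i hi
  exact hcs.trans_le (le_bhThreshold hs hi.le)

theorem tendsto_bhThreshold (hF : UpperSemicontinuousOn F (Icc 0 1))
    (hG : TendstoUniformlyOn G F l (Icc 0 1))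
    (hcross : ∃ᶠ s in 𝓝 (bhThreshold α F), s ∈ Icc (0 : ℝ) 1 ∧ s / α < F s) :
    Tendsto (fun i => bhThreshold α (G i)) l (𝓝 (bhThreshold α F)) :=
  tendsto_order.2 ⟨fun _ hc => eventually_lt_bhThreshold hG hcross hc,
    fun _ hc => eventually_bhThreshold_lt hF hG hc⟩

end Threshold

lemma upperSemicontinuous_of_monotone_of_continuousWithinAt_Ici {X Y : Type*} [LinearOrder X]
    [TopologicalSpace X] [LinearOrder Y] [TopologicalSpace Y] [ClosedIciTopology Y] {F : X → Y}
    (hmono : Monotone F) (hcont : ∀ t, ContinuousWithinAt F (Ici t) t) :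
    UpperSemicontinuous F := by
  intro t y hy
  rw [← nhdsLE_sup_nhdsGE, eventually_sup]
  refine ⟨?_, (hcont t).eventually_lt_const hy⟩
  filter_upwards [self_mem_nhdsWithin] with s hs using (hmono hs).trans_lt hy

section Measure

variable {Ω : Type*} [MeasurableSpace Ω]

/-- The cumulated p-value function `a` of a p-value function `p`. For `μ` the normalized Lebesgue
measure it is the paper's `a`, for `μ` the uniform measure on the grid `S_k` it is `a_k`, and for
their restrictions to the true-null region `U` it gives the two functions compared in (G2). -/
noncomputable def cumulatedPValue (μ : Measure Ω) (p : Ω → ℝ) (r : ℝ) : ℝ :=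
  μ.real {s | p s ≤ r}

/-- The false discovery proportion at threshold `r`, when `U` is the true-null region: the share of
`U` in the rejection region `{s | p s ≤ r}`. It is `0` when nothing is rejected, by the convention
`x / 0 = 0`. The numerator is written with `μ.restrict U`, so that it is a cumulated p-value
function as well. -/
noncomputable def fdp (μ : Measure Ω) (p : Ω → ℝ) (U : Set Ω) (r : ℝ) : ℝ :=
  cumulatedPValue (μ.restrict U) p r / cumulatedPValue μ p r

variable {μ : Measure Ω} {p : Ω → ℝ} {r : ℝ}

lemma cumulatedPValue_nonneg : 0 ≤ cumulatedPValue μ p r := measureReal_nonneg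

lemma cumulatedPValue_restrict (hp : Measurable p) (U : Set Ω) :
    cumulatedPValue (μ.restrict U) p r = μ.real (U ∩ {s | p s ≤ r}) := by
  rw [cumulatedPValue, measureReal_restrict_apply (measurableSet_le hp measurable_const),
    inter_comm]

lemma cumulatedPValue_restrict_restrict (hp : Measurable p) {T U : Set Ω} (hUT : U ⊆ T) :
    cumulatedPValue ((μ.restrict T).restrict U) p r = μ.real (U ∩ {s | p s ≤ r}) := by
  rw [Measure.restrict_restrict_of_subset hUT, cumulatedPValue_restrict hp]

section Finite

variable [IsFiniteMeasure μ]

lemma monotone_cumulatedPValue : Monotone (cumulatedPValue μ p) :=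
  fun _ _ hrs => measureReal_mono fun _ hx => le_trans hx hrs

lemma fdp_eq_zero_of_le {ε : ℝ} (hε : cumulatedPValue μ p ε = 0) (U : Set Ω) (hr : r ≤ ε) :
    fdp μ p U r = 0 := by
  rw [fdp, (monotone_cumulatedPValue hr |>.trans_eq hε).antisymm cumulatedPValue_nonneg, div_zero]

lemma tendsto_cumulatedPValue {l : Filter ℝ} [l.IsCountablyGenerated] (hp : Measurable p)
    (h : ∀ᵐ x ∂μ, ∀ᶠ s in l, p x ≤ s ↔ p x ≤ r) :
    Tendsto (cumulatedPValue μ p) l (𝓝 (cumulatedPValue μ p r)) :=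
  (ENNReal.tendsto_toReal (measure_ne_top _ _)).comp <|
    tendsto_measure_of_ae_tendsto_indicator_of_isFiniteMeasure l
      (measurableSet_le hp measurable_const) (fun _ => measurableSet_le hp measurable_const) h

lemma continuousWithinAt_Ici_cumulatedPValue (hp : Measurable p) (t : ℝ) :
    ContinuousWithinAt (cumulatedPValue μ p) (Ici t) t := by
  refine tendsto_cumulatedPValue hp (.of_forall fun x => ?_)
  rcases le_or_gt (p x) t with hx | hx
  · filter_upwards [self_mem_nhdsWithin] with s hs
    exact iff_of_true (hx.trans hs) hx
  · filter_upwards [nhdsWithin_le_nhds (gt_mem_nhds hx)] with s hs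
    exact iff_of_false hs.not_ge hx.not_ge

lemma continuousAt_cumulatedPValue (hp : Measurable p) {t : ℝ} (ht : μ {s | p s = t} = 0) :
    ContinuousAt (cumulatedPValue μ p) t := by
  have hne : ∀ᵐ x ∂μ, p x ≠ t := measure_eq_zero_iff_ae_notMem.1 ht
  refine tendsto_cumulatedPValue hp (hne.mono fun x hx => ?_)
  rcases hx.lt_or_gt with hx | hx
  · filter_upwards [lt_mem_nhds hx] with s hs using iff_of_true hs.le hx.le
  · filter_upwards [gt_mem_nhds hx] with s hs using iff_of_false hs.not_ge hx.not_ge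

lemma upperSemicontinuous_cumulatedPValue (hp : Measurable p) :
    UpperSemicontinuous (cumulatedPValue μ p) :=
  upperSemicontinuous_of_monotone_of_continuousWithinAt_Ici monotone_cumulatedPValue
    (continuousWithinAt_Ici_cumulatedPValue hp)

end Finite

section Limit

variable [IsFiniteMeasure μ] {ι : Type*} {l : Filter ι} {ν : ι → Measure Ω} {U : Set Ω} {α : ℝ}

lemma tendsto_fdp {r : ι → ℝ} {t : ℝ} (hp : Measurable p)
    (hF : TendstoUniformlyOn (fun i => cumulatedPValue (ν i) p) (cumulatedPValue μ p) l (Icc 0 1))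
    (hFU : TendstoUniformlyOn (fun i => cumulatedPValue ((ν i).restrict U) p)
      (cumulatedPValue (μ.restrict U) p) l (Icc 0 1))
    (hr : Tendsto r l (𝓝[Icc 0 1] t)) (ht : μ {s | p s = t} = 0)
    (hFt : cumulatedPValue μ p t ≠ 0) :
    Tendsto (fun i => fdp (ν i) p U (r i)) l (𝓝 (fdp μ p U t)) :=
  have htU : μ.restrict U {s | p s = t} = 0 :=
    nonpos_iff_eq_zero.1 ((Measure.restrict_apply_le U _).trans_eq ht)
  (hFU.tendsto_comp (continuousAt_cumulatedPValue hp htU).continuousWithinAt hr).div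
    (hF.tendsto_comp (continuousAt_cumulatedPValue hp ht).continuousWithinAt hr) hFt

lemma eventually_fdp_bhThreshold_eq_zero [∀ i, IsFiniteMeasure (ν i)] (hp : Measurable p)
    (hF : TendstoUniformlyOn (fun i => cumulatedPValue (ν i) p) (cumulatedPValue μ p) l (Icc 0 1))
    {ε : ℝ} (hε : bhThreshold α (cumulatedPValue μ p) < ε)
    (hνε : ∀ᶠ i in l, cumulatedPValue (ν i) p ε = 0) :
    ∀ᶠ i in l, fdp (ν i) p U (bhThreshold α (cumulatedPValue (ν i) p)) = 0 := by
  filter_upwards [hνε, eventually_bhThreshold_lt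
    ((upperSemicontinuous_cumulatedPValue hp).upperSemicontinuousOn _) hF hε] with i hi hlt
  exact fdp_eq_zero_of_le hi U hlt.le

theorem fBH_fdp_tendsto_general [∀ i, IsFiniteMeasure (ν i)] (hp : Measurable p) (hα : 0 < α)
    (hF : TendstoUniformlyOn (fun i => cumulatedPValue (ν i) p) (cumulatedPValue μ p) l (Icc 0 1))
    (hFU : TendstoUniformlyOn (fun i => cumulatedPValue ((ν i).restrict U) p)
      (cumulatedPValue (μ.restrict U) p) l (Icc 0 1))
    (hatom : μ {s | p s = bhThreshold α (cumulatedPValue μ p)} = 0)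
    (hcross : 0 < bhThreshold α (cumulatedPValue μ p) →
      ∃ᶠ s in 𝓝 (bhThreshold α (cumulatedPValue μ p)),
        s ∈ Icc (0 : ℝ) 1 ∧ s / α < cumulatedPValue μ p s)
    (hzero : bhThreshold α (cumulatedPValue μ p) = 0 →
      ∃ ε > 0, ∀ᶠ i in l, cumulatedPValue (ν i) p ε = 0) :
    Tendsto (fun i => fdp (ν i) p U (bhThreshold α (cumulatedPValue (ν i) p))) l
      (𝓝 (fdp μ p U (bhThreshold α (cumulatedPValue μ p)))) := by
  rcases bhThreshold_mem_Icc (α := α) (F := cumulatedPValue μ p) |>.1.eq_or_lt' with h₀ | hpos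
  · obtain rfl | _ := l.eq_or_neBot
    · exact tendsto_bot
    obtain ⟨ε, hε, hνε⟩ := hzero h₀
    have hν₀ : ∀ᶠ i in l, cumulatedPValue (ν i) p 0 = 0 := hνε.mono fun i hi =>
      ((monotone_cumulatedPValue hε.le).trans_eq hi).antisymm cumulatedPValue_nonneg
    have hμ₀ : cumulatedPValue μ p 0 = 0 := tendsto_nhds_unique
      (hF.tendsto_at ⟨le_rfl, zero_le_one⟩) (tendsto_const_nhds.congr' (hν₀.mono fun _ h => h.symm))
    rw [fdp_eq_zero_of_le hμ₀ U h₀.le]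
    exact tendsto_const_nhds.congr' <|
      (eventually_fdp_bhThreshold_eq_zero hp hF (h₀ ▸ hε) hνε).mono fun _ h => h.symm
  · have hthr := tendsto_bhThreshold
      ((upperSemicontinuous_cumulatedPValue hp).upperSemicontinuousOn _) hF (hcross hpos)
    have hF_pos : 0 < cumulatedPValue μ p (bhThreshold α (cumulatedPValue μ p)) :=
      (div_pos hpos hα).trans_le
        (bhThreshold_div_le hα monotone_cumulatedPValue cumulatedPValue_nonneg)
    exact tendsto_fdp hp hF hFU
      (tendsto_nhdsWithin_iff.2 ⟨hthr, .of_forall fun _ => bhThreshold_mem_Icc⟩) hatom hF_pos.ne'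

end Limit

section Discrete

variable [MeasurableSingletonClass Ω] {S : Finset Ω}

lemma uniformOn_real_setOf (P : Ω → Prop) [DecidablePred P] :
    (uniformOn (S : Set Ω)).real {x | P x} = ((S.filter P).card : ℝ) / S.card := by
  have hinter : (S : Set Ω) ∩ {x | P x} = (S.filter P : Finset Ω) := by ext; simp
  rw [measureReal_def, uniformOn, cond_apply S.measurableSet, hinter, Measure.count_apply_finset,
    Measure.count_apply_finset]
  simp [div_eq_inv_mul]

lemma cumulatedPValue_uniformOn :
    cumulatedPValue (uniformOn (S : Set Ω)) p r =
      ((S.filter fun s => p s ≤ r).card : ℝ) / S.card :=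
  uniformOn_real_setOf _

lemma cumulatedPValue_restrict_uniformOn (hp : Measurable p) (U : Set Ω) :
    cumulatedPValue ((uniformOn (S : Set Ω)).restrict U) p r =
      ((S.filter fun s => s ∈ U ∧ p s ≤ r).card : ℝ) / S.card :=
  (cumulatedPValue_restrict hp U).trans (uniformOn_real_setOf fun s => s ∈ U ∧ p s ≤ r)

lemma cumulatedPValue_uniformOn_eq_zero (h : ∀ s ∈ S, r < p s) :
    cumulatedPValue (uniformOn (S : Set Ω)) p r = 0 := by
  rw [cumulatedPValue_uniformOn, Finset.filter_false_of_mem fun s hs => (h s hs).not_ge]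
  simp

lemma fdp_uniformOn (hS : S.Nonempty) (hp : Measurable p) (U : Set Ω) :
    fdp (uniformOn (S : Set Ω)) p U r =
      if (S.filter fun s => p s ≤ r).Nonempty then
        (((S.filter fun s => p s ≤ r).filter fun s => s ∈ U).card : ℝ) /
          (S.filter fun s => p s ≤ r).card
      else 0 := by
  have hcard : (S.card : ℝ) ≠ 0 := by exact_mod_cast hS.card_pos.ne'
  rw [fdp, cumulatedPValue_uniformOn, cumulatedPValue_restrict_uniformOn hp,
    div_div_div_cancel_right₀ hcard, Finset.filter_filter]
  simp only [and_comm]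
  split_ifs with hne
  · rfl
  · rw [Finset.not_nonempty_iff_eq_empty.1 hne, Finset.card_empty, Nat.cast_zero, div_zero]

end Discrete

lemma fdp_restrict (hp : Measurable p) {T U : Set Ω} (hUT : U ⊆ T) :
    fdp (μ.restrict T) p U r =
      if 0 < μ {t ∈ T | p t ≤ r} then
        (μ (U ∩ {t | p t ≤ r})).toReal / (μ {t ∈ T | p t ≤ r}).toReal
      else 0 := by
  rw [fdp, cumulatedPValue_restrict_restrict hp hUT, cumulatedPValue_restrict hp]
  split_ifs with hpos
  · rfl
  · have hnull : μ (T ∩ {t | p t ≤ r}) = 0 := nonpos_iff_eq_zero.1 (not_lt.1 hpos)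
    rw [measureReal_def μ (T ∩ _), hnull, ENNReal.toReal_zero, div_zero]

end Measure

/-- under the grid approximation assumptions (G1), (G2) and the regularity
assumptions (a1)–(a3), the step-`k` false discovery proportions of the finite BH procedures
converge to the limiting false discovery proportion of the functional BH procedure:
`Q_k → Q`, where `Q_k = #(A_k ∩ U)/#A_k` if `A_k ≠ ∅` (else `0`), with
`A_k = {t ∈ S_k : p t ≤ b_k}`, and `Q = μ(U ∩ {t : p t ≤ α*})/μ{t ∈ T : p t ≤ α*}` if
`μ{t ∈ T : p t ≤ α*} > 0` (else `0`). -/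
theorem fBH_fdp_tendsto {d : ℕ}
    (T : Set (EuclideanSpace ℝ (Fin d)))
    (hT_open : IsOpen T) (hT_bdd : Bornology.IsBounded T) (hT_ne : T.Nonempty)
    (hT_norm : volume T = 1)
    (p : EuclideanSpace ℝ (Fin d) → ℝ) (hp_meas : Measurable p)
    (hp_val : ∀ t ∈ T, p t ∈ Set.Icc (0:ℝ) 1)
    (α : ℝ) (hα : α ∈ Set.Ioo (0:ℝ) 1)
    -- cumulated p-value function and adjusted threshold
    (a : ℝ → ℝ) (ha : ∀ r, a r = (volume {s ∈ T | p s ≤ r}).toReal)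
    (αStar : ℝ) (hαStar : αStar = sSup {r ∈ Set.Icc (0:ℝ) 1 | r / α ≤ a r})
    -- nested grids and empirical quantities
    (S : ℕ → Finset (EuclideanSpace ℝ (Fin d)))
    (hS_ne : ∀ k, (S k).Nonempty) (hS_sub : ∀ k, ↑(S k) ⊆ T)
    (hS_mono : ∀ k, S k ⊆ S (k + 1))
    (ak : ℕ → ℝ → ℝ)
    (hak : ∀ k r, ak k r = (((S k).filter (fun s => p s ≤ r)).card : ℝ) / (S k).card)
    (b : ℕ → ℝ) (hb : ∀ k, b k = sSup {r ∈ Set.Icc (0:ℝ) 1 | r / α ≤ ak k r})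
    -- (G1)
    (hG1 : TendstoUniformlyOn ak a atTop (Set.Icc 0 1))
    -- true-null region and (G2)
    (U : Set (EuclideanSpace ℝ (Fin d))) (hU_sub : U ⊆ T) (hU_meas : MeasurableSet U)
    (aU : ℝ → ℝ) (haU : ∀ r, aU r = (volume (U ∩ {s | p s ≤ r})).toReal)
    (aUk : ℕ → ℝ → ℝ)
    (haUk : ∀ k r, aUk k r =
      (((S k).filter (fun s => s ∈ U ∧ p s ≤ r)).card : ℝ) / (S k).card)
    (hG2 : TendstoUniformlyOn aUk aU atTop (Set.Icc 0 1))
    -- (a1)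
    (ha1 : ∀ t ∈ Set.Icc (0:ℝ) 1, volume {s ∈ T | p s = t} = 0)
    -- (a2)
    (ha2 : αStar ∈ Set.Ioc 0 α → ∀ O : Set ℝ, IsOpen O → αStar ∈ O →
      ∃ s₁ ∈ O ∩ Set.Icc (0:ℝ) 1, ∃ s₂ ∈ O ∩ Set.Icc (0:ℝ) 1,
        s₁ / α < a s₁ ∧ a s₂ < s₂ / α)
    -- (a3)
    (ha3 : αStar = 0 → 0 < sInf (p '' T))
    -- step-k rejection sets
    (A : ℕ → Finset (EuclideanSpace ℝ (Fin d)))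
    (hA : ∀ k, A k = (S k).filter (fun t => p t ≤ b k))
    -- step-k false discovery proportions
    (Qk : ℕ → ℝ)
    (hQk : ∀ k, Qk k = if (A k).Nonempty
      then (((A k).filter (fun t => t ∈ U)).card : ℝ) / (A k).card else 0)
    -- limiting false discovery proportion
    (Q : ℝ)
    (hQ : Q = if 0 < volume {t ∈ T | p t ≤ αStar}
      then (volume (U ∩ {t | p t ≤ αStar})).toReal / (volume {t ∈ T | p t ≤ αStar}).toReal
      else 0) :
    Tendsto Qk atTop (nhds Q) := by
  have : IsProbabilityMeasure (volume.restrict T) := ⟨by simp [hT_norm]⟩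
  obtain rfl : a = cumulatedPValue (volume.restrict T) p :=
    funext fun r => (ha r).trans (cumulatedPValue_restrict hp_meas T).symm
  obtain rfl : aU = cumulatedPValue ((volume.restrict T).restrict U) p :=
    funext fun r => (haU r).trans (cumulatedPValue_restrict_restrict hp_meas hU_sub).symm
  obtain rfl : ak = fun k => cumulatedPValue (uniformOn (S k)) p :=
    funext₂ fun k r => (hak k r).trans cumulatedPValue_uniformOn.symm
  obtain rfl : aUk = fun k => cumulatedPValue ((uniformOn (S k)).restrict U) p :=
    funext₂ fun k r => (haUk k r).trans (cumulatedPValue_restrict_uniformOn hp_meas U).symm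
  obtain rfl : αStar = bhThreshold α (cumulatedPValue (volume.restrict T) p) := hαStar
  obtain rfl : Qk = fun k => fdp (uniformOn (S k)) p U
      (bhThreshold α (cumulatedPValue (uniformOn (S k)) p)) := funext fun k => by
    rw [hQk, hA, hb, fdp_uniformOn (hS_ne k) hp_meas]; rfl
  rw [hQ, ← fdp_restrict hp_meas hU_sub]
  refine fBH_fdp_tendsto_general hp_meas hα.1 hG1 hG2 ?_ (fun hpos => frequently_nhds_iff.2 ?_) ?_
  · rw [Measure.restrict_apply (measurableSet_eq_fun hp_meas measurable_const), inter_comm]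
    exact ha1 _ bhThreshold_mem_Icc
  · intro O hO hO_open
    obtain ⟨s, hs, -, -, hlt, -⟩ :=
      ha2 ⟨hpos, bhThreshold_le hα.1 fun _ => measureReal_le_one⟩ O hO_open hO
    exact ⟨s, hs.1, hs.2, hlt⟩
  · have hbdd : BddBelow (p '' T) := ⟨0, forall_mem_image.2 fun t ht => (hp_val t ht).1⟩
    exact fun h₀ => ⟨_, half_pos (ha3 h₀), .of_forall fun k =>
      cumulatedPValue_uniformOn_eq_zero fun s hs => (half_lt_self (ha3 h₀)).trans_le
        (csInf_le hbdd (mem_image_of_mem p (hS_sub k hs)))⟩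
end
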